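/- Let G be a bipartite graph with fixed parts A and B. Then the following three statements are equivalent: (1) either G is nonempty and G' is the disjoint union of complete bipartite graphs, or G is empty but the sets A and B are infinite; (2) G is proximinal for an ultrametric space (X,d) with X = A ∪ B; (3) G is proximinal for some ultrametric space. -/

import Mathlib

open Set

/-- A semimetric on a set `X`: a symmetric, nonnegative distance function
vanishing exactly on the diagonal. -/
structure IsSemimetric {X : Type*} (d : X → X → ℝ) : Prop where
  nonneg : ∀ x y, 0 ≤ d x y
  symm : ∀ x y, d x y = d y x
  eq_zero_iff : ∀ x y, d x y = 0 ↔ x = y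

/-- A metric: a semimetric satisfying the triangle inequality. -/
def IsMetric {X : Type*} (d : X → X → ℝ) : Prop :=
  IsSemimetric d ∧ ∀ x y z, d x y ≤ d x z + d z y

/-- An ultrametric: a semimetric satisfying the strong triangle inequality
(which implies the triangle inequality). -/
def IsUltrametric {X : Type*} (d : X → X → ℝ) : Prop :=
  IsSemimetric d ∧ ∀ x y z, d x y ≤ max (d x z) (d z y)

/-- `dist(A,B) = inf {d a b : a ∈ A, b ∈ B}`. -/
noncomputable def SetDist {X : Type*} (d : X → X → ℝ) (A B : Set X) : ℝ :=
  sInf (Set.image2 d A B)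

/-- `A` is proximinal in `(X,d)`: every point of `X` has a best approximation in `A`. -/
def Proximinal {X : Type*} (d : X → X → ℝ) (A : Set X) : Prop :=
  ∀ x : X, ∃ a ∈ A, d x a = sInf ((d x) '' A)

/-- `G` is the proximinal graph `G_{X,d}(A,B)`: a bipartite graph with (nonempty,
disjoint, proximinal) parts `A` and `B`, whose vertex set is `A ∪ B` (all other
points of the ambient type are isolated and are not vertices of the graph), and in
which `a ∈ A` and `b ∈ B` are adjacent iff `d a b = dist(A,B)`. -/
structure ProximinalFor {X : Type*} (d : X → X → ℝ) (G : SimpleGraph X) (A B : Set X) : Prop where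
  nonemptyA : A.Nonempty
  nonemptyB : B.Nonempty
  disj : Disjoint A B
  proxA : Proximinal d A
  proxB : Proximinal d B
  edges_between : ∀ u v, G.Adj u v → (u ∈ A ∧ v ∈ B) ∨ (u ∈ B ∧ v ∈ A)
  adj_iff : ∀ a ∈ A, ∀ b ∈ B, (G.Adj a b ↔ d a b = SetDist d A B)

/-- `G` is a farthest graph for `(X,d)` with parts `A`, `B`: `a ∈ A` and `b ∈ B`
are adjacent iff `d a b = sup {d x y : x ∈ A, y ∈ B}`, i.e. iff `d a b` is an upper
bound of all the cross distances. -/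
structure FarthestFor {X : Type*} (d : X → X → ℝ) (G : SimpleGraph X) (A B : Set X) : Prop where
  nonemptyA : A.Nonempty
  nonemptyB : B.Nonempty
  disj : Disjoint A B
  edges_between : ∀ u v, G.Adj u v → (u ∈ A ∧ v ∈ B) ∨ (u ∈ B ∧ v ∈ A)
  adj_iff : ∀ a ∈ A, ∀ b ∈ B, (G.Adj a b ↔ ∀ x ∈ A, ∀ y ∈ B, d x y ≤ d a b)

universe u

/-- The subgraph `G'` of `G` induced by the non-isolated vertices (whose vertex set
is `G.support` and whose edge set is `E(G)`) is a disjoint union of complete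
bipartite graphs: there is a family of pairwise disjoint complete bipartite graphs,
with parts `C i`, `D i`, whose vertex sets cover `G.support` and whose edges are
exactly the edges of `G`. -/
def SupportIsDisjointUnionOfCompleteBipartite {V : Type u} (G : SimpleGraph V) : Prop :=
  ∃ (ι : Type u) (C D : ι → Set V),
    (∀ i, (C i).Nonempty) ∧ (∀ i, (D i).Nonempty) ∧ (∀ i, Disjoint (C i) (D i)) ∧
    (Pairwise fun i j => Disjoint (C i ∪ D i) (C j ∪ D j)) ∧
    (⋃ i, C i ∪ D i) = G.support ∧
    (∀ u v, G.Adj u v ↔ ∃ i, (u ∈ C i ∧ v ∈ D i) ∨ (u ∈ D i ∧ v ∈ C i))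

/-!
In an ultrametric space `d x y ≤ r` is an equivalence relation for every `r ≥ 0`. Taking
`r = dist(A, B)`, the edges of a proximinal graph join exactly the equivalent points of `A` and `B`,
so the classes that meet both parts are its complete bipartite components. Conversely, for any
equivalence relation, the distance `1` inside a class and `2` across classes realizes the graph
joining the equivalent points of `A` and `B`, provided there is at least one edge.

A proximinal graph is empty exactly when `dist(A, B)` is not attained, which is impossible if one
part is finite. When both are infinite, weight the points by some `r > 0` with infimum `0` on each
part; then `max (r x) (r y)` does not attain `dist(A, B) = 0`.
-/

section Distance

variable {X Y : Type*} {d : X → X → ℝ} {A B : Set X}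

theorem setDist_le (hd : ∀ x y, 0 ≤ d x y) {a b : X} (ha : a ∈ A) (hb : b ∈ B) :
    SetDist d A B ≤ d a b :=
  csInf_le ⟨0, forall_mem_image2.2 fun x _ y _ => hd x y⟩ (mem_image2_of_mem ha hb)

theorem setDist_nonneg (hd : ∀ x y, 0 ≤ d x y) : 0 ≤ SetDist d A B :=
  Real.sInf_nonneg (forall_mem_image2.2 fun x _ y _ => hd x y)

theorem setDist_eq_of_forall_le {a b : X} (ha : a ∈ A) (hb : b ∈ B)
    (h : ∀ x ∈ A, ∀ y ∈ B, d a b ≤ d x y) : SetDist d A B = d a b :=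
  IsLeast.csInf_eq ⟨mem_image2_of_mem ha hb, forall_mem_image2.2 h⟩

theorem setDist_comm (hd : ∀ x y, d x y = d y x) : SetDist d A B = SetDist d B A := by
  rw [SetDist, image2_swap]
  simp only [SetDist, hd]

theorem proximinal_iff_forall_exists_forall_le (hd : ∀ x y, 0 ≤ d x y) :
    Proximinal d A ↔ ∀ x, ∃ a ∈ A, ∀ y ∈ A, d x a ≤ d x y := by
  refine forall_congr' fun x => exists_congr fun a => and_congr_right fun ha => ?_
  constructor
  · intro hinf y hy
    exact hinf.trans_le
      (csInf_le ⟨0, forall_mem_image.2 fun z _ => hd x z⟩ (mem_image_of_mem _ hy))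
  · intro hmin
    exact (IsLeast.csInf_eq ⟨mem_image_of_mem _ ha, forall_mem_image.2 hmin⟩).symm

theorem Proximinal.of_finite_image (hA : A.Nonempty) (hfin : ∀ x, (d x '' A).Finite) :
    Proximinal d A := fun x =>
  (hA.image (d x)).csInf_mem (hfin x)

theorem Proximinal.exists_eq_setDist_of_finite (hB : Proximinal d B) (hd : ∀ x y, 0 ≤ d x y)
    (hA : A.Nonempty) (hfin : A.Finite) : ∃ a ∈ A, ∃ b ∈ B, d a b = SetDist d A B := by
  choose p hpB hp using (proximinal_iff_forall_exists_forall_le hd).1 hB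
  obtain ⟨a, ha, hmin⟩ := exists_min_image A (fun x => d x (p x)) hfin hA
  exact ⟨a, ha, p a, hpB a, .symm <| setDist_eq_of_forall_le ha (hpB a) fun x hx y hy =>
    (hmin x hx).trans (hp x y hy)⟩

theorem Proximinal.comap {f : Y → X} {S : Set Y} (h : Proximinal d (f '' S)) :
    Proximinal (fun x y => d (f x) (f y)) S := fun x => by
  simpa only [exists_mem_image, image_image] using h (f x)

theorem IsUltrametric.comap (hd : IsUltrametric d) {f : Y → X} (hf : Function.Injective f) :
    IsUltrametric fun x y => d (f x) (f y) :=
  ⟨⟨fun _ _ => hd.1.nonneg _ _, fun _ _ => hd.1.symm _ _,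
    fun _ _ => (hd.1.eq_zero_iff _ _).trans hf.eq_iff⟩, fun _ _ _ => hd.2 _ _ _⟩

/-- The equivalence relation `d x y ≤ r` of an ultrametric `d`, whose classes are the closed balls
of radius `r`. -/
def IsUltrametric.closedBallSetoid (hd : IsUltrametric d) {r : ℝ} (hr : 0 ≤ r) : Setoid X where
  r x y := d x y ≤ r
  iseqv :=
    { refl := fun x => ((hd.1.eq_zero_iff x x).2 rfl).trans_le hr
      symm := fun h => (hd.1.symm _ _).trans_le h
      trans := fun hxy hyz => (hd.2 _ _ _).trans (max_le hxy hyz) }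

end Distance

namespace ProximinalFor

variable {X Y : Type*} {d : X → X → ℝ} {G : SimpleGraph X} {A B : Set X}

theorem isBipartiteWith (h : ProximinalFor d G A B) : G.IsBipartiteWith A B :=
  ⟨h.disj, h.edges_between⟩

theorem symm (h : ProximinalFor d G A B) (hd : ∀ x y, d x y = d y x) : ProximinalFor d G B A where
  nonemptyA := h.nonemptyB
  nonemptyB := h.nonemptyA
  disj := h.disj.symm
  proxA := h.proxB
  proxB := h.proxA
  edges_between := h.isBipartiteWith.symm.mem_of_adj
  adj_iff b hb a ha := by rw [G.adj_comm, h.adj_iff a ha b hb, hd a b, setDist_comm hd]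

theorem infinite_left (h : ProximinalFor d ⊥ A B) (hd : ∀ x y, 0 ≤ d x y) : A.Infinite := by
  intro hfin
  obtain ⟨a, ha, b, hb, hab⟩ := h.proxB.exists_eq_setDist_of_finite hd h.nonemptyA hfin
  exact (h.adj_iff a ha b hb).2 hab

theorem comap {f : Y → X} {S T : Set Y} (h : ProximinalFor d G (f '' S) (f '' T))
    (hf : Function.Injective f) :
    ProximinalFor (fun x y => d (f x) (f y)) (G.comap f) S T where
  nonemptyA := h.nonemptyA.of_image
  nonemptyB := h.nonemptyB.of_image
  disj := (disjoint_image_iff hf).1 h.disj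
  proxA := h.proxA.comap
  proxB := h.proxB.comap
  edges_between u v huv := by
    simpa only [hf.mem_set_image] using h.edges_between (f u) (f v) huv
  adj_iff a ha b hb := by
    simpa only [SimpleGraph.comap_adj, SetDist, image2_image_left, image2_image_right] using
      h.adj_iff (f a) (mem_image_of_mem f ha) (f b) (mem_image_of_mem f hb)

theorem exists_setoid_adj_iff (h : ProximinalFor d G A B) (hd : IsUltrametric d) :
    ∃ s : Setoid X, ∀ a ∈ A, ∀ b ∈ B, (G.Adj a b ↔ s a b) := by
  refine ⟨hd.closedBallSetoid (setDist_nonneg (A := A) (B := B) hd.1.nonneg), fun a ha b hb => ?_⟩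
  exact (h.adj_iff a ha b hb).trans (setDist_le hd.1.nonneg ha hb).ge_iff_eq'.symm

end ProximinalFor

section CompleteBipartite

variable {V : Type u} {G : SimpleGraph V} {A B : Set V}

theorem SupportIsDisjointUnionOfCompleteBipartite.adj_of_adj_of_adj_of_adj
    (hS : SupportIsDisjointUnionOfCompleteBipartite G) {u v w x : V}
    (huv : G.Adj u v) (hvw : G.Adj v w) (hwx : G.Adj w x) : G.Adj u x := by
  obtain ⟨ι, C, D, -, -, hCD, hdisj, -, hadj⟩ := hS
  have eq_of_mem {i j : ι} {y : V} (hi : y ∈ C i ∪ D i) (hj : y ∈ C j ∪ D j) : i = j :=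
    hdisj.eq (not_disjoint_iff.2 ⟨y, hi, hj⟩)
  have mem_right {i : ι} {y z : V} (hy : y ∈ C i) (hyz : G.Adj y z) : z ∈ D i := by
    obtain ⟨j, ⟨hyC, hz⟩ | ⟨hyD, -⟩⟩ := (hadj y z).1 hyz
    · exact eq_of_mem (.inl hy) (.inl hyC) ▸ hz
    · obtain rfl := eq_of_mem (.inl hy) (.inr hyD)
      exact ((hCD i).notMem_of_mem_left hy hyD).elim
  have mem_left {i : ι} {y z : V} (hy : y ∈ D i) (hyz : G.Adj y z) : z ∈ C i := by
    obtain ⟨j, ⟨hyC, -⟩ | ⟨hyD, hz⟩⟩ := (hadj y z).1 hyz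
    · obtain rfl := eq_of_mem (.inr hy) (.inl hyC)
      exact ((hCD i).notMem_of_mem_left hyC hy).elim
    · exact eq_of_mem (.inr hy) (.inr hyD) ▸ hz
  obtain ⟨i, ⟨hu, hv⟩ | ⟨hu, hv⟩⟩ := (hadj u v).1 huv
  · exact (hadj u x).2 ⟨i, .inl ⟨hu, mem_right (mem_left hv hvw) hwx⟩⟩
  · exact (hadj u x).2 ⟨i, .inr ⟨hu, mem_left (mem_right hv hvw) hwx⟩⟩

theorem SupportIsDisjointUnionOfCompleteBipartite.adj_of_walk
    (hS : SupportIsDisjointUnionOfCompleteBipartite G) (hG : G.IsBipartiteWith A B) {a b : V} :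
    G.Walk a b → a ∈ A → b ∈ B → G.Adj a b
  | .nil, ha, hb => (hG.disjoint.notMem_of_mem_left ha hb).elim
  | .cons hab .nil, _, _ => hab
  | .cons hau (.cons huv p), ha, hb =>
    have hv := hG.symm.mem_of_mem_adj (hG.mem_of_mem_adj ha hau) huv
    hS.adj_of_adj_of_adj_of_adj hau huv (hS.adj_of_walk hG p hv hb)

theorem SupportIsDisjointUnionOfCompleteBipartite.adj_iff_reachable
    (hS : SupportIsDisjointUnionOfCompleteBipartite G) (hG : G.IsBipartiteWith A B)
    {a b : V} (ha : a ∈ A) (hb : b ∈ B) : G.Adj a b ↔ G.Reachable a b :=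
  ⟨SimpleGraph.Adj.reachable, fun ⟨p⟩ => hS.adj_of_walk hG p ha hb⟩

theorem adj_iff_setoid_and_mem (hG : G.IsBipartiteWith A B) {s : Setoid V}
    (hs : ∀ a ∈ A, ∀ b ∈ B, (G.Adj a b ↔ s a b)) {u v : V} :
    G.Adj u v ↔ s u v ∧ (u ∈ A ∧ v ∈ B ∨ u ∈ B ∧ v ∈ A) := by
  constructor
  · intro huv
    refine ⟨?_, hG.mem_of_adj huv⟩
    rcases hG.mem_of_adj huv with ⟨hu, hv⟩ | ⟨hu, hv⟩
    · exact (hs u hu v hv).1 huv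
    · exact s.symm ((hs v hv u hu).1 huv.symm)
  · rintro ⟨huv, ⟨hu, hv⟩ | ⟨hu, hv⟩⟩
    · exact (hs u hu v hv).2 huv
    · exact ((hs v hv u hu).2 (s.symm huv)).symm

theorem SupportIsDisjointUnionOfCompleteBipartite.of_setoid (hG : G.IsBipartiteWith A B)
    (s : Setoid V) (hs : ∀ a ∈ A, ∀ b ∈ B, (G.Adj a b ↔ s a b)) :
    SupportIsDisjointUnionOfCompleteBipartite G := by
  let cls : V → Quotient s := Quotient.mk s
  have hadj (u v : V) : G.Adj u v ↔ cls u = cls v ∧ (u ∈ A ∧ v ∈ B ∨ u ∈ B ∧ v ∈ A) := by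
    rw [Quotient.eq, adj_iff_setoid_and_mem hG hs]
  have cls_eq {c : Quotient s} {x : V} (hx : x ∈ {a ∈ A | cls a = c} ∪ {b ∈ B | cls b = c}) :
      cls x = c := hx.elim And.right And.right
  refine ⟨{c : Quotient s // (∃ a ∈ A, cls a = c) ∧ ∃ b ∈ B, cls b = c},
    fun c => {a ∈ A | cls a = c}, fun c => {b ∈ B | cls b = c},
    fun c => c.2.1, fun c => c.2.2, fun c => ?_, fun c c' hcc' => ?_, ?_, fun u v => ?_⟩
  · exact hG.disjoint.mono (sep_subset _ _) (sep_subset _ _)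
  · exact disjoint_left.2 fun x hx hx' => hcc' (Subtype.ext ((cls_eq hx).symm.trans (cls_eq hx')))
  · ext u
    rw [mem_iUnion, SimpleGraph.mem_support]
    constructor
    · rintro ⟨⟨c, ⟨a, ha, hac⟩, b, hb, hbc⟩, ⟨hu, huc⟩ | ⟨hu, huc⟩⟩
      · exact ⟨b, (hadj u b).2 ⟨huc.trans hbc.symm, .inl ⟨hu, hb⟩⟩⟩
      · exact ⟨a, (hadj u a).2 ⟨huc.trans hac.symm, .inr ⟨hu, ha⟩⟩⟩
    · rintro ⟨v, huv⟩
      obtain ⟨hcls, ⟨hu, hv⟩ | ⟨hu, hv⟩⟩ := (hadj u v).1 huv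
      · exact ⟨⟨cls u, ⟨u, hu, rfl⟩, v, hv, hcls.symm⟩, .inl ⟨hu, rfl⟩⟩
      · exact ⟨⟨cls u, ⟨v, hv, hcls.symm⟩, u, hu, rfl⟩, .inr ⟨hu, rfl⟩⟩
  · rw [hadj]
    constructor
    · rintro ⟨hcls, ⟨hu, hv⟩ | ⟨hu, hv⟩⟩
      · exact ⟨⟨cls u, ⟨u, hu, rfl⟩, v, hv, hcls.symm⟩, .inl ⟨⟨hu, rfl⟩, hv, hcls.symm⟩⟩
      · exact ⟨⟨cls u, ⟨v, hv, hcls.symm⟩, u, hu, rfl⟩, .inr ⟨⟨hu, rfl⟩, hv, hcls.symm⟩⟩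
    · rintro ⟨c, ⟨⟨hu, huc⟩, hv, hvc⟩ | ⟨⟨hu, huc⟩, hv, hvc⟩⟩
      · exact ⟨huc.trans hvc.symm, .inl ⟨hu, hv⟩⟩
      · exact ⟨huc.trans hvc.symm, .inr ⟨hu, hv⟩⟩

end CompleteBipartite

section EquivalenceDistance

variable {V : Type*}

open Classical in
/-- The ultrametric with distance `1` inside the classes of `s` and `2` across them; it realizes a
graph whose edges are the equivalent pairs of points of its two parts. -/
noncomputable def setoidDist (s : Setoid V) (x y : V) : ℝ :=
  if x = y then 0 else if s x y then 1 else 2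

theorem isUltrametric_setoidDist (s : Setoid V) : IsUltrametric (setoidDist s) := by
  refine ⟨⟨fun x y => ?_, fun x y => ?_, fun x y => ?_⟩, fun x y z => ?_⟩
  · unfold setoidDist
    split_ifs <;> norm_num
  · have : s x y ↔ s y x := s.comm'
    unfold setoidDist
    split_ifs <;> grind
  · unfold setoidDist
    split_ifs <;> simp_all
  · have : s x z → s z y → s x y := s.trans
    unfold setoidDist
    split_ifs <;> grind

theorem proximinal_setoidDist (s : Setoid V) {A : Set V} (hA : A.Nonempty) :
    Proximinal (setoidDist s) A := by
  refine .of_finite_image hA fun x => (toFinite {0, 1, 2}).subset ?_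
  rintro _ ⟨y, -, rfl⟩
  unfold setoidDist
  split_ifs <;> simp

theorem one_le_setoidDist (s : Setoid V) {x y : V} (hxy : x ≠ y) : 1 ≤ setoidDist s x y := by
  rw [setoidDist, if_neg hxy]
  split_ifs <;> norm_num

theorem setoidDist_eq_one_iff {s : Setoid V} {x y : V} (hxy : x ≠ y) :
    setoidDist s x y = 1 ↔ s x y := by
  rw [setoidDist, if_neg hxy]
  split_ifs with h <;> simp [h]

theorem proximinalFor_setoidDist {G : SimpleGraph V} {A B : Set V} (hG : G.IsBipartiteWith A B)
    (hne : G ≠ ⊥) (s : Setoid V) (hs : ∀ a ∈ A, ∀ b ∈ B, (G.Adj a b ↔ s a b)) :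
    ProximinalFor (setoidDist s) G A B := by
  obtain ⟨a, ha, b, hb, hab⟩ : ∃ a ∈ A, ∃ b ∈ B, G.Adj a b := by
    obtain ⟨u, v, huv⟩ := SimpleGraph.ne_bot_iff_exists_adj.1 hne
    rcases hG.mem_of_adj huv with ⟨hu, hv⟩ | ⟨hu, hv⟩
    · exact ⟨u, hu, v, hv, huv⟩
    · exact ⟨v, hv, u, hu, huv.symm⟩
  have adj_iff_eq_one : ∀ x ∈ A, ∀ y ∈ B, (G.Adj x y ↔ setoidDist s x y = 1) := fun x hx y hy =>
    (hs x hx y hy).trans (setoidDist_eq_one_iff (hG.disjoint.ne_of_mem hx hy)).symm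
  have hone : setoidDist s a b = 1 := (adj_iff_eq_one a ha b hb).1 hab
  have setDist_eq_one : SetDist (setoidDist s) A B = 1 := by
    rw [setDist_eq_of_forall_le ha hb, hone]
    exact fun x hx y hy => hone.trans_le (one_le_setoidDist s (hG.disjoint.ne_of_mem hx hy))
  exact ⟨⟨a, ha⟩, ⟨b, hb⟩, hG.disjoint, proximinal_setoidDist s ⟨a, ha⟩,
    proximinal_setoidDist s ⟨b, hb⟩, hG.mem_of_adj, setDist_eq_one ▸ adj_iff_eq_one⟩

end EquivalenceDistance

section MaxDistance

variable {V : Type*} {r : V → ℝ} {A B : Set V}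

open Classical in
/-- The distance `max (r x) (r y)` off the diagonal for a weight function `r`; it realizes the empty
graph on two parts on which `r` takes arbitrarily small values. -/
noncomputable def maxDist (r : V → ℝ) (x y : V) : ℝ :=
  if x = y then 0 else max (r x) (r y)

theorem isUltrametric_maxDist (hr : ∀ x, 0 < r x) : IsUltrametric (maxDist r) := by
  have hpos (x y : V) : 0 < max (r x) (r y) := lt_max_of_lt_left (hr x)
  refine ⟨⟨fun x y => ?_, fun x y => ?_, fun x y => ?_⟩, fun x y z => ?_⟩
  · unfold maxDist
    split_ifs
    exacts [le_rfl, (hpos x y).le]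
  · unfold maxDist
    split_ifs <;> grind
  · unfold maxDist
    split_ifs with h
    exacts [iff_of_true rfl h, iff_of_false (hpos x y).ne' h]
  · have := hpos x y
    unfold maxDist
    split_ifs <;> grind

theorem maxDist_of_ne {x y : V} (hxy : x ≠ y) : maxDist r x y = max (r x) (r y) :=
  if_neg hxy

theorem proximinal_maxDist (hr : ∀ x, 0 < r x) (hA : ∀ x, ∃ a ∈ A, r a ≤ r x) :
    Proximinal (maxDist r) A := by
  have hd : ∀ x y, 0 ≤ maxDist r x y := (isUltrametric_maxDist hr).1.nonneg
  refine (proximinal_iff_forall_exists_forall_le hd).2 fun x => ?_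
  by_cases hx : x ∈ A
  · exact ⟨x, hx, fun y _ => (if_pos rfl).trans_le (hd x y)⟩
  · have ne_of_mem {y : V} (hy : y ∈ A) : x ≠ y := fun h => hx (h ▸ hy)
    obtain ⟨a, ha, hax⟩ := hA x
    refine ⟨a, ha, fun y hy => ?_⟩
    rw [maxDist_of_ne (ne_of_mem ha), maxDist_of_ne (ne_of_mem hy), max_eq_left hax]
    exact le_max_left _ _

theorem proximinalFor_maxDist_bot (hr : ∀ x, 0 < r x) (hAB : Disjoint A B)
    (hA : ∀ ε > 0, ∃ a ∈ A, r a < ε) (hB : ∀ ε > 0, ∃ b ∈ B, r b < ε) :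
    ProximinalFor (maxDist r) ⊥ A B where
  nonemptyA := let ⟨a, ha, _⟩ := hA 1 one_pos; ⟨a, ha⟩
  nonemptyB := let ⟨b, hb, _⟩ := hB 1 one_pos; ⟨b, hb⟩
  disj := hAB
  proxA := proximinal_maxDist hr fun x => (hA (r x) (hr x)).imp fun _ h => ⟨h.1, h.2.le⟩
  proxB := proximinal_maxDist hr fun x => (hB (r x) (hr x)).imp fun _ h => ⟨h.1, h.2.le⟩
  edges_between _ _ h := h.elim
  adj_iff a ha b hb := by
    refine iff_of_false id (ne_of_gt ?_)
    obtain ⟨a', ha', haa'⟩ := hA (r a) (hr a)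
    obtain ⟨b', hb', hab'⟩ := hB (r a) (hr a)
    calc SetDist (maxDist r) A B
        ≤ maxDist r a' b' := setDist_le (isUltrametric_maxDist hr).1.nonneg ha' hb'
      _ = max (r a') (r b') := maxDist_of_ne (hAB.ne_of_mem ha' hb')
      _ < r a := max_lt haa' hab'
      _ ≤ max (r a) (r b) := le_max_left _ _
      _ = maxDist r a b := (maxDist_of_ne (hAB.ne_of_mem ha hb)).symm

theorem exists_pos_forall_exists_lt_of_infinite (hA : A.Infinite) :
    ∃ r : V → ℝ, (∀ x, 0 < r x) ∧ ∀ ε > 0, ∃ a ∈ A, r a < ε := by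
  let e : ℕ ↪ A := hA.natEmbedding
  obtain ⟨g, hg⟩ := (Subtype.val_injective.comp e.injective).hasLeftInverse
  refine ⟨fun x => 1 / ((g x : ℝ) + 1), fun x => by positivity, fun ε hε => ?_⟩
  obtain ⟨n, hn⟩ := exists_nat_one_div_lt hε
  exact ⟨e n, (e n).2, by simpa only [show g (e n) = n from hg n] using hn⟩

theorem exists_proximinalFor_bot (hAB : Disjoint A B) (hA : A.Infinite) (hB : B.Infinite) :
    ∃ d : V → V → ℝ, IsUltrametric d ∧ ProximinalFor d ⊥ A B := by
  obtain ⟨rA, hrA, hA⟩ := exists_pos_forall_exists_lt_of_infinite hA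
  obtain ⟨rB, hrB, hB⟩ := exists_pos_forall_exists_lt_of_infinite hB
  have hr (x : V) : 0 < min (rA x) (rB x) := lt_min (hrA x) (hrB x)
  exact ⟨_, isUltrametric_maxDist hr, proximinalFor_maxDist_bot hr hAB
    (fun ε hε => (hA ε hε).imp fun _ h => ⟨h.1, min_lt_of_left_lt h.2⟩)
    (fun ε hε => (hB ε hε).imp fun _ h => ⟨h.1, min_lt_of_right_lt h.2⟩)⟩

end MaxDistance

theorem stmt10_general {V : Type u} {G : SimpleGraph V} {A B : Set V}
    (hG : G.IsBipartiteWith A B) :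
    List.TFAE [
      (G.edgeSet.Nonempty ∧ SupportIsDisjointUnionOfCompleteBipartite G) ∨
        (G.edgeSet = ∅ ∧ A.Infinite ∧ B.Infinite),
      ∃ d : V → V → ℝ, IsUltrametric d ∧ ProximinalFor d G A B,
      ∃ (X : Type u) (d : X → X → ℝ) (H : SimpleGraph X) (A' B' : Set X) (f : V → X),
        IsUltrametric d ∧ ProximinalFor d H A' B' ∧ Function.Injective f ∧
        f '' A = A' ∧ f '' B = B' ∧ ∀ u v, (G.Adj u v ↔ H.Adj (f u) (f v))] := by
  rw [SimpleGraph.edgeSet_nonempty, SimpleGraph.edgeSet_eq_empty]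
  tfae_have 1 → 2
  | .inl ⟨hne, hS⟩ => ⟨setoidDist G.reachableSetoid, isUltrametric_setoidDist _,
      proximinalFor_setoidDist hG hne _ fun _ ha _ hb => hS.adj_iff_reachable hG ha hb⟩
  | .inr ⟨hbot, hA, hB⟩ => hbot ▸ exists_proximinalFor_bot hG.disjoint hA hB
  tfae_have 2 → 1 := by
    rintro ⟨d, hd, h⟩
    rcases eq_or_ne G ⊥ with rfl | hne
    · exact .inr ⟨rfl, h.infinite_left hd.1.nonneg, (h.symm hd.1.symm).infinite_left hd.1.nonneg⟩
    · obtain ⟨s, hs⟩ := h.exists_setoid_adj_iff hd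
      exact .inl ⟨hne, .of_setoid hG s hs⟩
  tfae_have 2 → 3 := fun ⟨d, hd, h⟩ =>
    ⟨V, d, G, A, B, id, hd, h, Function.injective_id, image_id A, image_id B, fun _ _ => .rfl⟩
  tfae_have 3 → 2 := by
    rintro ⟨X, d, H, _, _, f, hd, h, hf, rfl, rfl, hadj⟩
    obtain rfl : G = H.comap f := SimpleGraph.ext (by ext u v; exact hadj u v)
    exact ⟨_, hd.comap hf, h.comap hf⟩
  tfae_finish

/-- Theorem 2.9: for a bipartite graph `G` with fixed parts `A`, `B` (vertex set
`A ∪ B = V`), the following are equivalent: (1) `G` is nonempty and `G'` is the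
disjoint union of complete bipartite graphs, or `G` is empty but `A` and `B` are
infinite; (2) `G` is proximinal for an ultrametric space with ground set `A ∪ B`;
(3) `G` is proximinal for some ultrametric space (containing copies of `A`, `B`). -/
theorem stmt10 {V : Type u} (G : SimpleGraph V) (A B : Set V)
    (hA : A.Nonempty) (hB : B.Nonempty) (hAB : Disjoint A B)
    (hcover : A ∪ B = Set.univ)
    (hbip : ∀ u v, G.Adj u v → (u ∈ A ∧ v ∈ B) ∨ (u ∈ B ∧ v ∈ A)) :
    List.TFAE [
      (G.edgeSet.Nonempty ∧ SupportIsDisjointUnionOfCompleteBipartite G) ∨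
        (G.edgeSet = ∅ ∧ A.Infinite ∧ B.Infinite),
      ∃ d : V → V → ℝ, IsUltrametric d ∧ ProximinalFor d G A B,
      ∃ (X : Type u) (d : X → X → ℝ) (H : SimpleGraph X) (A' B' : Set X) (f : V → X),
        IsUltrametric d ∧ ProximinalFor d H A' B' ∧ Function.Injective f ∧
        f '' A = A' ∧ f '' B = B' ∧ ∀ u v, (G.Adj u v ↔ H.Adj (f u) (f v))] :=
  stmt10_general ⟨hAB, hbip⟩
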